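/- Let U ⊆ ℂ be an open neighbourhood of 0, let f : U → ℂ be smooth, and let k ∈ ℕ. Suppose that f(z) = O(|z|^k) and ∂_z̄ f(z) = O(|z|^k) as z → 0. Then there exists a ∈ ℂ such that f(z) − a·z^k = O(|z|^{k+1}) as z → 0. (This is the key local step in the proof of Lemma 2.3 (lem:extend): the lowest-order homogeneous part of the component ψ₋ of an eigenspinor at a zero is a holomorphic monomial a z^{k}, which lets the map by eigenspinors to ℂP^{2m−1} extend continuously across common zeroes.) -/

import Mathlib

open Asymptotics Filter

/-- Wirtinger derivative `∂_z̄ f = ½(∂ₓf + i ∂_yf)` of a map `f : ℂ → ℂ`. -/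
noncomputable def wirtZbar (f : ℂ → ℂ) (z : ℂ) : ℂ :=
  (1 / 2 : ℂ) • (fderiv ℝ f z 1 + Complex.I • fderiv ℝ f z Complex.I)

/-!
Taylor's formula and `f = O(|z|^k)` kill the derivatives of `f` at `0` of order below `k`, since a
symmetric multilinear map is determined by its diagonal. The same applied to `∂_z̄ f = O(|z|^k)`
gives `D^(k-1)(∂_z̄ f)(0) = 0`, which says that `D^k f(0)` is complex-linear in its last slot and
hence, by symmetry, in every slot. Therefore the leading Taylor term `D^k f(0)(z, …, z) / k!` equals
`a z^k` with `a = D^k f(0)(1, …, 1) / k!`.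
-/

open Function Set Topology
open scoped ContDiff Nat

section IteratedDerivatives

variable {𝕜 E F : Type*} [NontriviallyNormedField 𝕜] [NormedAddCommGroup E] [NormedSpace 𝕜 E]
  [NormedAddCommGroup F] [NormedSpace 𝕜 F] {f : E → F} {x : E} {n : ℕ}

theorem continuousMultilinearMap_eq_zero_of_symm_of_diag_eq_zero [CharZero 𝕜] {p : E [×n]→L[𝕜] F}
    (hsymm : ∀ (σ : Equiv.Perm (Fin n)) (v : Fin n → E), p (v ∘ σ) = p v)
    (hdiag : ∀ y, p (fun _ ↦ y) = 0) : p = 0 := by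
  ext v
  have hpolar : ∑ σ : Equiv.Perm (Fin n), p (v ∘ σ) = 0 :=
    calc ∑ σ : Equiv.Perm (Fin n), p (v ∘ σ)
      _ = iteratedFDeriv 𝕜 n (fun y ↦ p fun _ ↦ y) 0 v := (p.iteratedFDeriv_comp_diagonal 0 v).symm
      _ = 0 := by simp [hdiag]
  simpa [hsymm, Fintype.card_perm, ← Nat.cast_smul_eq_nsmul 𝕜, Nat.factorial_ne_zero] using hpolar

theorem contDiffAt_iteratedFDeriv_apply {m : ℕ∞ω} (hf : ContDiffAt 𝕜 (m + n) f x)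
    (v : Fin n → E) : ContDiffAt 𝕜 m (fun y ↦ iteratedFDeriv 𝕜 n f y v) x :=
  (ContinuousMultilinearMap.apply 𝕜 (fun _ ↦ E) F v).contDiff.contDiffAt.comp x
    (hf.iteratedFDeriv_right le_rfl)

theorem iteratedFDeriv_succ_succ_apply_of_contDiffAt (hf : ContDiffAt 𝕜 (n + 2 : ℕ) f x)
    (v : Fin (n + 2) → E) :
    iteratedFDeriv 𝕜 (n + 2) f x v =
      fderiv 𝕜 (fderiv 𝕜 fun y ↦ iteratedFDeriv 𝕜 n f y (Fin.tail (Fin.tail v))) x (v 0) (v 1) := by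
  have hleft : (fun y ↦ iteratedFDeriv 𝕜 (n + 1) f y (Fin.tail v)) =ᶠ[𝓝 x]
      fun y ↦ fderiv 𝕜 (fun z ↦ iteratedFDeriv 𝕜 n f z (Fin.tail (Fin.tail v))) y (v 1) := by
    filter_upwards [hf.eventually (ENat.natCast_ne_coe_top _)] with y hy
    exact (hy.differentiableAt_iteratedFDeriv (by norm_cast; lia)).iteratedFDeriv_succ_apply_left'
  rw [(hf.differentiableAt_iteratedFDeriv (by norm_cast; lia)).iteratedFDeriv_succ_apply_left',
    hleft.fderiv_eq, fderiv_clm_apply _ (differentiableAt_const _)]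
  · simp
  · have hC2 : ContDiffAt 𝕜 2 (fun y ↦ iteratedFDeriv 𝕜 n f y (Fin.tail (Fin.tail v))) x :=
      contDiffAt_iteratedFDeriv_apply (hf.of_le (by norm_cast; lia)) _
    exact (hC2.fderiv_right (m := 1) (by norm_num)).differentiableAt one_ne_zero

theorem iteratedDerivWithin_comp_add_smul {y : E} {s : Set 𝕜} (hs : UniqueDiffOn 𝕜 s)
    (hf : ∀ t ∈ s, ContDiffAt 𝕜 n f (x + t • y)) :
    EqOn (iteratedDerivWithin n (fun t : 𝕜 ↦ f (x + t • y)) s)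
      (fun t ↦ iteratedFDeriv 𝕜 n f (x + t • y) fun _ ↦ y) s := by
  induction n with
  | zero => simp [EqOn]
  | succ n ih =>
    intro t ht
    have hdiff : DifferentiableAt 𝕜 (iteratedFDeriv 𝕜 n f) (x + t • y) :=
      (hf t ht).differentiableAt_iteratedFDeriv (by norm_cast; lia)
    have hline : DifferentiableAt 𝕜 (fun t ↦ iteratedFDeriv 𝕜 n f (x + t • y) fun _ ↦ y) t := by
      fun_prop
    have hih := ih fun t ht ↦ (hf t ht).of_le (by norm_cast; lia)
    rw [iteratedDerivWithin_succ, derivWithin_congr hih (hih ht), hline.derivWithin (hs t ht)]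
    exact (hf t ht).deriv_fderiv_add_smul

end IteratedDerivatives

section Symmetry

variable {𝕜 E F : Type*} [RCLike 𝕜] [NormedAddCommGroup E] [NormedSpace 𝕜 E]
  [NormedAddCommGroup F] [NormedSpace 𝕜 F] {f : E → F} {x : E} {n : ℕ}

/- The first transposition is the symmetry of the second derivative of `D^(n-1) f`; the others come
from differentiating the symmetry of `D^n f`, which holds in a neighbourhood of `x`. -/
theorem iteratedFDeriv_comp_swap_castSucc_succ (hf : ContDiffAt 𝕜 (n + 1 : ℕ) f x) (i : Fin n)
    (v : Fin (n + 1) → E) :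
    iteratedFDeriv 𝕜 (n + 1) f x (v ∘ Equiv.swap i.castSucc i.succ) =
      iteratedFDeriv 𝕜 (n + 1) f x v := by
  induction n generalizing x with
  | zero => exact i.elim0
  | succ n ih =>
    cases i using Fin.cases with
    | zero =>
      rw [iteratedFDeriv_succ_succ_apply_of_contDiffAt hf,
        iteratedFDeriv_succ_succ_apply_of_contDiffAt hf]
      have hC2 : ContDiffAt 𝕜 2 (fun y ↦ iteratedFDeriv 𝕜 n f y (Fin.tail (Fin.tail v))) x :=
        contDiffAt_iteratedFDeriv_apply (hf.of_le (by norm_cast; lia)) _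
      exact hC2.isSymmSndFDerivAt (by simp) (v 1) (v 0)
    | succ j =>
      have hσ (k : Fin (n + 1)) : Equiv.swap j.succ.castSucc j.succ.succ k.succ =
          (Equiv.swap j.castSucc j.succ k).succ := by
        rw [← Fin.succ_castSucc, (Fin.succ_injective _).map_swap]
      have htail : Fin.tail (v ∘ Equiv.swap j.succ.castSucc j.succ.succ) =
          Fin.tail v ∘ Equiv.swap j.castSucc j.succ := by
        ext k
        exact congrArg v (hσ k)
      have hdiff : DifferentiableAt 𝕜 (iteratedFDeriv 𝕜 (n + 1) f) x :=
        hf.differentiableAt_iteratedFDeriv (mod_cast Nat.lt_succ_self (n + 1))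
      have hswap :
          (fun y ↦ iteratedFDeriv 𝕜 (n + 1) f y (Fin.tail v ∘ Equiv.swap j.castSucc j.succ)) =ᶠ[𝓝 x]
            fun y ↦ iteratedFDeriv 𝕜 (n + 1) f y (Fin.tail v) := by
        filter_upwards [hf.eventually (ENat.natCast_ne_coe_top _)] with y hy
        exact ih (hy.of_le (mod_cast Nat.le_succ _)) j (Fin.tail v)
      have h0 : Equiv.swap j.succ.castSucc j.succ.succ (0 : Fin (n + 2)) = 0 :=
        Equiv.swap_apply_of_ne_of_ne (by simp [Fin.ext_iff]) (by simp [Fin.ext_iff])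
      rw [hdiff.iteratedFDeriv_succ_apply_left', hdiff.iteratedFDeriv_succ_apply_left', htail,
        hswap.fderiv_eq, comp_apply, h0]

theorem iteratedFDeriv_comp_perm_of_contDiffAt (hf : ContDiffAt 𝕜 n f x)
    (σ : Equiv.Perm (Fin n)) (v : Fin n → E) :
    iteratedFDeriv 𝕜 n f x (v ∘ σ) = iteratedFDeriv 𝕜 n f x v := by
  cases n with
  | zero => rw [Subsingleton.elim (v ∘ σ) v]
  | succ n =>
    have hσ : σ ∈ Submonoid.closure (range fun i : Fin n ↦ Equiv.swap i.castSucc i.succ) := by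
      simp [Equiv.Perm.mclosure_swap_castSucc_succ]
    induction hσ using Submonoid.closure_induction generalizing v with
    | mem σ hσ =>
      obtain ⟨i, rfl⟩ := hσ
      exact iteratedFDeriv_comp_swap_castSucc_succ hf i v
    | one => rfl
    | mul σ τ _ _ hσ hτ => rw [Equiv.Perm.coe_mul, ← comp_assoc, hτ, hσ]

end Symmetry

section Taylor

variable {E F : Type*} [NormedAddCommGroup E] [NormedSpace ℝ E] [NormedAddCommGroup F]
  [NormedSpace ℝ F] {f : E → F} {x y : E} {n : ℕ}

theorem norm_sub_sum_iteratedFDeriv_le {C : ℝ}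
    (hf : ∀ t ∈ Icc (0 : ℝ) 1, ContDiffAt ℝ (n + 1 : ℕ) f (x + t • y))
    (hC : ∀ t ∈ Icc (0 : ℝ) 1, ‖iteratedFDeriv ℝ (n + 1) f (x + t • y)‖ ≤ C) :
    ‖f (x + y) - ∑ i ∈ Finset.range (n + 1), (i ! : ℝ)⁻¹ • iteratedFDeriv ℝ i f x fun _ ↦ y‖ ≤
      C * ‖y‖ ^ (n + 1) / n ! := by
  have hderiv {i : ℕ} (hi : i ≤ n + 1) {t : ℝ} (ht : t ∈ Icc (0 : ℝ) 1) :
      iteratedDerivWithin i (fun t : ℝ ↦ f (x + t • y)) (Icc 0 1) t =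
        iteratedFDeriv ℝ i f (x + t • y) fun _ ↦ y :=
    iteratedDerivWithin_comp_add_smul (uniqueDiffOn_Icc one_pos)
      (fun t ht ↦ (hf t ht).of_le (mod_cast hi)) ht
  have hline : ContDiffOn ℝ (n + 1) (fun t : ℝ ↦ f (x + t • y)) (Icc 0 1) := fun t ht ↦
    ((hf t ht).comp t (by fun_prop)).contDiffWithinAt
  have hbound (t : ℝ) (ht : t ∈ Icc (0 : ℝ) 1) :
      ‖iteratedDerivWithin (n + 1) (fun t : ℝ ↦ f (x + t • y)) (Icc 0 1) t‖ ≤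
        C * ‖y‖ ^ (n + 1) := by
    rw [hderiv le_rfl ht]
    simpa using (iteratedFDeriv ℝ (n + 1) f (x + t • y)).le_of_opNorm_le (hC t ht) fun _ ↦ y
  have htaylor : taylorWithinEval (fun t : ℝ ↦ f (x + t • y)) n (Icc 0 1) 0 1 =
      ∑ i ∈ Finset.range (n + 1), (i ! : ℝ)⁻¹ • iteratedFDeriv ℝ i f x fun _ ↦ y := by
    rw [taylor_within_apply]
    refine Finset.sum_congr rfl fun i hi ↦ ?_
    rw [hderiv (Finset.mem_range.1 hi).le (left_mem_Icc.2 zero_le_one)]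
    simp
  simpa [htaylor] using
    taylor_mean_remainder_bound zero_le_one hline (right_mem_Icc.2 zero_le_one) hbound

theorem isBigO_sub_sum_iteratedFDeriv (hf : ContDiffAt ℝ (n + 1 : ℕ) f x) :
    (fun y ↦ f (x + y) -
      ∑ i ∈ Finset.range (n + 1), (i ! : ℝ)⁻¹ • iteratedFDeriv ℝ i f x fun _ ↦ y) =O[𝓝 0]
        fun y ↦ ‖y‖ ^ (n + 1) := by
  obtain ⟨C, hC⟩ : ∃ C, ∀ᶠ z in 𝓝 x, ‖iteratedFDeriv ℝ (n + 1) f z‖ ≤ C := by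
    have hcont : ContinuousAt (iteratedFDeriv ℝ (n + 1) f) x :=
      (hf.iteratedFDeriv_right (m := 0) (by simp)).continuousAt
    exact ⟨_, hcont.norm.eventually_le_const (lt_add_one _)⟩
  obtain ⟨r, hr, hball⟩ := Metric.eventually_nhds_iff_ball.1
    (hC.and (hf.eventually (ENat.natCast_ne_coe_top _)))
  refine .of_bound (C / n !) ?_
  filter_upwards [Metric.ball_mem_nhds 0 hr] with y hy
  have hseg (t : ℝ) (ht : t ∈ Icc (0 : ℝ) 1) : x + t • y ∈ Metric.ball x r := by
    rw [mem_ball_iff_norm, add_sub_cancel_left, norm_smul, Real.norm_of_nonneg ht.1]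
    exact (mul_le_of_le_one_left (norm_nonneg y) ht.2).trans_lt (mem_ball_zero_iff.1 hy)
  calc ‖f (x + y) - ∑ i ∈ Finset.range (n + 1), (i ! : ℝ)⁻¹ • iteratedFDeriv ℝ i f x fun _ ↦ y‖
    _ ≤ C * ‖y‖ ^ (n + 1) / n ! :=
        norm_sub_sum_iteratedFDeriv_le (fun t ht ↦ (hball _ (hseg t ht)).2)
          fun t ht ↦ (hball _ (hseg t ht)).1
    _ = C / n ! * ‖‖y‖ ^ (n + 1)‖ := by rw [norm_pow, norm_norm]; ring

theorem isBigO_sub_iteratedFDeriv_diag (hf : ContDiffAt ℝ (n + 1 : ℕ) f x)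
    (hlow : ∀ i < n, iteratedFDeriv ℝ i f x = 0) :
    (fun y ↦ f (x + y) - (n ! : ℝ)⁻¹ • iteratedFDeriv ℝ n f x fun _ ↦ y) =O[𝓝 0]
      fun y ↦ ‖y‖ ^ (n + 1) := by
  refine (isBigO_sub_sum_iteratedFDeriv hf).congr_left fun y ↦ ?_
  rw [Finset.sum_range_succ, Finset.sum_eq_zero fun i hi ↦ ?_, zero_add]
  simp [hlow i (Finset.mem_range.1 hi)]

theorem iteratedFDeriv_eq_zero_of_isBigO (hf : ContDiffAt ℝ n f x)
    (hfO : (fun y ↦ f (x + y)) =O[𝓝 0] fun y ↦ ‖y‖ ^ n) {j : ℕ} (hj : j < n) :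
    iteratedFDeriv ℝ j f x = 0 := by
  induction j using Nat.strong_induction_on with
  | _ j ih =>
    have hfj : ContDiffAt ℝ (j + 1 : ℕ) f x := hf.of_le (mod_cast hj)
    have hdiagO : (fun y ↦ ((j ! : ℝ)⁻¹ • iteratedFDeriv ℝ j f x) fun _ ↦ y) =O[𝓝 0]
        fun y ↦ ‖y‖ ^ (j + 1) := by
      have hpow : (fun y : E ↦ ‖y‖ ^ n) =O[𝓝 0] fun y ↦ ‖y‖ ^ (j + 1) := by
        refine .of_norm_eventuallyLE ?_
        filter_upwards [Metric.ball_mem_nhds 0 one_pos] with y hy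
        rw [norm_pow, norm_norm]
        exact pow_le_pow_of_le_one (norm_nonneg y) (mem_ball_zero_iff.1 hy).le hj
      simpa using (hfO.trans hpow).sub
        (isBigO_sub_iteratedFDeriv_diag hfj fun i hi ↦ ih i hi (hi.trans hj))
    refine continuousMultilinearMap_eq_zero_of_symm_of_diag_eq_zero
      (iteratedFDeriv_comp_perm_of_contDiffAt (hfj.of_le (by norm_cast; lia))) fun y ↦ ?_
    simpa [Nat.factorial_ne_zero] using hdiagO.continuousMultilinearMap_apply_eq_zero y

end Taylor

section Wirtinger

variable {F : Type*} [NormedAddCommGroup F] [NormedSpace ℂ F] {f : ℂ → F} {x : ℂ} {n : ℕ}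

/-- The conjugate-linear part `½ (A 1 + i A i)` of a real-linear map `A` on `ℂ`, taken as a
real-linear function of `A` so that `∂_z̄ f` is its composition with `fderiv ℝ f`. -/
noncomputable def wirtZbarSymbol : (ℂ →L[ℝ] F) →L[ℝ] F :=
  (1 / 2 : ℂ) • (ContinuousLinearMap.apply ℝ F 1 +
    Complex.I • ContinuousLinearMap.apply ℝ F Complex.I)

theorem wirtZbar_eq_wirtZbarSymbol_fderiv (g : ℂ → ℂ) (z : ℂ) :
    wirtZbar g z = wirtZbarSymbol (fderiv ℝ g z) := rfl

theorem map_mul_of_wirtZbarSymbol_eq_zero {A : ℂ →L[ℝ] F} (hA : wirtZbarSymbol A = 0) (c z : ℂ) :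
    A (c * z) = c • A z := by
  have hsum : A 1 + Complex.I • A Complex.I = 0 :=
    (smul_eq_zero_iff_right (one_div_ne_zero (two_ne_zero' ℂ))).1 hA
  have hI : A.toLinearMap Complex.I = Complex.I • A.toLinearMap 1 := by
    simp [eq_neg_of_add_eq_zero_left hsum, smul_smul]
  exact real_linearMap_map_smul_complex hI c z

theorem multilinearMap_apply_diag_eq_pow_smul {p : MultilinearMap ℝ (fun _ : Fin n ↦ ℂ) F}
    (hp : ∀ (v : Fin n → ℂ) (i : Fin n) (c z : ℂ), p (update v i (c * z)) = c • p (update v i z))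
    (z : ℂ) : p (fun _ ↦ z) = z ^ n • p fun _ ↦ 1 := by
  let q : MultilinearMap ℂ (fun _ : Fin n ↦ ℂ) F :=
    { toFun := p
      map_update_add' := p.map_update_add
      map_update_smul' := fun v i c z ↦ by rw [smul_eq_mul]; convert hp v i c z }
  simpa [q] using q.map_smul_univ (fun _ ↦ z) fun _ ↦ 1

theorem iteratedFDeriv_succ_update_last_mul (hf : ContDiffAt ℝ (n + 1 : ℕ) f x)
    (hd : iteratedFDeriv ℝ n (fun z ↦ wirtZbarSymbol (fderiv ℝ f z)) x = 0)
    (v : Fin (n + 1) → ℂ) (c z : ℂ) :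
    iteratedFDeriv ℝ (n + 1) f x (update v (Fin.last n) (c * z)) =
      c • iteratedFDeriv ℝ (n + 1) f x (update v (Fin.last n) z) := by
  have hcomm : iteratedFDeriv ℝ n (wirtZbarSymbol ∘ fderiv ℝ f) x =
      wirtZbarSymbol.compContinuousMultilinearMap (iteratedFDeriv ℝ n (fderiv ℝ f) x) :=
    wirtZbarSymbol.iteratedFDeriv_comp_left (hf.fderiv_right (m := n) (by norm_cast)) le_rfl
  have hsymbol : wirtZbarSymbol (iteratedFDeriv ℝ n (fderiv ℝ f) x (Fin.init v)) = 0 :=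
    DFunLike.congr_fun (hcomm.symm.trans hd) (Fin.init v)
  simp only [iteratedFDeriv_succ_apply_right, Fin.init_update_last, update_self]
  exact map_mul_of_wirtZbarSymbol_eq_zero hsymbol c z

theorem iteratedFDeriv_succ_update_mul (hf : ContDiffAt ℝ (n + 1 : ℕ) f x)
    (hd : iteratedFDeriv ℝ n (fun z ↦ wirtZbarSymbol (fderiv ℝ f z)) x = 0)
    (v : Fin (n + 1) → ℂ) (i : Fin (n + 1)) (c z : ℂ) :
    iteratedFDeriv ℝ (n + 1) f x (update v i (c * z)) =
      c • iteratedFDeriv ℝ (n + 1) f x (update v i z) := by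
  have hmove (w : ℂ) : iteratedFDeriv ℝ (n + 1) f x (update v i w) =
      iteratedFDeriv ℝ (n + 1) f x
        (update (v ∘ Equiv.swap i (Fin.last n)) (Fin.last n) w) := by
    rw [← iteratedFDeriv_comp_perm_of_contDiffAt hf (Equiv.swap i (Fin.last n)),
      update_comp_equiv, Equiv.symm_swap, Equiv.swap_apply_left]
  rw [hmove, hmove, iteratedFDeriv_succ_update_last_mul hf hd]

theorem iteratedFDeriv_diag_eq_pow_smul (hf : ContDiffAt ℝ n f x)
    (hd : ∀ j, j + 1 = n → iteratedFDeriv ℝ j (fun z ↦ wirtZbarSymbol (fderiv ℝ f z)) x = 0)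
    (z : ℂ) :
    (iteratedFDeriv ℝ n f x fun _ ↦ z) = z ^ n • iteratedFDeriv ℝ n f x fun _ ↦ 1 := by
  cases n with
  | zero => simp
  | succ n =>
    exact multilinearMap_apply_diag_eq_pow_smul
      (p := (iteratedFDeriv ℝ (n + 1) f x).toMultilinearMap)
      (iteratedFDeriv_succ_update_mul hf (hd n rfl)) z

theorem lowest_order_term_is_holomorphic_monomial_general {k : ℕ}
    (hf : ContDiffAt ℝ (k + 1 : ℕ) f 0) (hfO : f =O[𝓝 0] fun z ↦ ‖z‖ ^ k)
    (hdO : (fun z ↦ wirtZbarSymbol (fderiv ℝ f z)) =O[𝓝 0] fun z ↦ ‖z‖ ^ k) :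
    ∃ a : F, (fun z ↦ f z - z ^ k • a) =O[𝓝 0] fun z ↦ ‖z‖ ^ (k + 1) := by
  have hfk : ContDiffAt ℝ k f 0 := hf.of_le (mod_cast k.le_succ)
  have hdk : ContDiffAt ℝ k (fun z ↦ wirtZbarSymbol (fderiv ℝ f z)) 0 :=
    wirtZbarSymbol.contDiff.contDiffAt.comp 0 (hf.fderiv_right (by norm_cast))
  have hmonomial : ∀ z, (iteratedFDeriv ℝ k f 0 fun _ ↦ z) =
      z ^ k • iteratedFDeriv ℝ k f 0 fun _ ↦ 1 :=
    iteratedFDeriv_diag_eq_pow_smul hfk fun j hj ↦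
      iteratedFDeriv_eq_zero_of_isBigO hdk (by simpa using hdO) (by lia)
  have hleading : (fun z ↦ f (0 + z) - (k ! : ℝ)⁻¹ • iteratedFDeriv ℝ k f 0 fun _ ↦ z) =O[𝓝 0]
      fun z ↦ ‖z‖ ^ (k + 1) :=
    isBigO_sub_iteratedFDeriv_diag hf fun j ↦
      iteratedFDeriv_eq_zero_of_isBigO hfk (by simpa using hfO)
  refine ⟨(k ! : ℝ)⁻¹ • iteratedFDeriv ℝ k f 0 fun _ ↦ 1, hleading.congr_left fun z ↦ ?_⟩
  rw [zero_add, hmonomial, smul_comm]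

end Wirtinger

/-- The key local step in Lemma 2.3: if a smooth `f` on a neighbourhood of `0 ∈ ℂ`
satisfies `f(z) = O(|z|^k)` and `∂_z̄ f(z) = O(|z|^k)` as `z → 0`, then the lowest-order
homogeneous part of `f` at `0` is a holomorphic monomial: there is `a ∈ ℂ` with
`f(z) - a z^k = O(|z|^{k+1})`. -/
theorem lowest_order_term_is_holomorphic_monomial
    (U : Set ℂ) (hU : IsOpen U) (h0 : (0 : ℂ) ∈ U)
    (f : ℂ → ℂ) (hf : ContDiffOn ℝ (⊤ : ℕ∞) f U) (k : ℕ)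
    (hfO : f =O[nhds 0] fun z : ℂ => ‖z‖ ^ k)
    (hdO : (fun z => wirtZbar f z) =O[nhds 0] fun z : ℂ => ‖z‖ ^ k) :
    ∃ a : ℂ, (fun z : ℂ => f z - a * z ^ k) =O[nhds 0] fun z : ℂ => ‖z‖ ^ (k + 1) := by
  have hfk : ContDiffAt ℝ (k + 1 : ℕ) f 0 :=
    (hf.contDiffAt (hU.mem_nhds h0)).of_le (mod_cast le_top)
  simp only [wirtZbar_eq_wirtZbarSymbol_fderiv] at hdO
  simpa only [smul_eq_mul, mul_comm] using
    lowest_order_term_is_holomorphic_monomial_general hfk hfO hdO
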